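/- arXiv:2512.20456 — 2 statements merged into one kernel-verified Lean document; each statement's English description precedes it below -/
import Mathlib

section
/- Let G be a simple graph on the vertex set {1,…,n} (n ≥ 0). Then the signed sum Σ (−1)^{n−r}, taken over all ordered set partitions (L_1,…,L_r) of the vertex set into independent sets of G, equals the number of acyclic orientations of G. (This is the reduced, millipede form of the paper's Theorem on graphically stable moduli spaces: after the up-down involution, the alternating sum of boundary strata of M̄_{0,Γ} for a graph Γ with two dominating vertices P, Q reduces to this sum for G = Γ∖{P,Q}, and it equals, up to sign, the number of acyclic orientations of G.) -/
/-- `L` is an ordered set partition of the vertex set of `G` all of whose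
blocks are independent sets of `G`: a list of pairwise disjoint nonempty
finite subsets of the vertices whose union is everything, with no two
elements of a block adjacent. -/
def IsIndepOSP {n : ℕ} (G : SimpleGraph (Fin n)) (L : List (Finset (Fin n))) : Prop :=
  (∀ B ∈ L, B.Nonempty) ∧ L.Pairwise Disjoint ∧
    L.foldr (· ∪ ·) ∅ = Finset.univ ∧
    ∀ B ∈ L, ∀ u ∈ B, ∀ v ∈ B, ¬ G.Adj u v

/-- `R` is an acyclic orientation of `G`: for every pair of adjacent vertices
exactly one of the two directions holds, `R` only relates adjacent vertices,
and the transitive closure of `R` is irreflexive. -/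
def IsAcyclicOrientation {V : Type*} (G : SimpleGraph V) (R : V → V → Prop) : Prop :=
  (∀ u v, R u v → G.Adj u v) ∧
  (∀ u v, G.Adj u v → (R u v ↔ ¬ R v u)) ∧
  ∀ v, ¬ Relation.TransGen R v v

/-!
Call an ordered set partition of the vertices a layering of a relation `R` if each arrow of `R` goes
from a block to a strictly later one. A partition into independent sets is a layering of exactly one
acyclic orientation of `G`, the one directing each edge from the earlier block to the later one;
conversely every layering of an orientation of `G` has independent blocks. So it is enough that,
for each acyclic `R`, the signed sum over the layerings of `R` is `1`. This follows by induction: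
the first block of a layering is an arbitrary nonempty set `B` of sources, the remaining blocks are
a layering of the rest, and `∑ (-1) ^ (#B + 1)` over the nonempty subsets `B` of a nonempty set
is `1`.
-/

open Finset

section AcyclicOrientation

variable {V α : Type*} {G : SimpleGraph V} {R : V → V → Prop} {f : V → α} {u v : V}

theorem IsAcyclicOrientation.adj_iff (hR : IsAcyclicOrientation G R) :
    G.Adj u v ↔ R u v ∨ R v u := by
  refine ⟨fun h => ?_, fun h => h.elim (hR.1 u v) fun h => (hR.1 v u h).symm⟩
  rw [hR.2.1 u v h]
  exact (em (R v u)).symm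

theorem IsAcyclicOrientation.rel_iff_adj_and_lt [Preorder α] (hR : IsAcyclicOrientation G R)
    (hf : ∀ u v, R u v → f u < f v) : R u v ↔ G.Adj u v ∧ f u < f v := by
  refine ⟨fun h => ⟨hR.1 u v h, hf u v h⟩, fun ⟨hadj, hlt⟩ => ?_⟩
  exact (hR.adj_iff.1 hadj).resolve_right fun h => hlt.asymm (hf v u h)

theorem isAcyclicOrientation_adj_and_lt [LinearOrder α] (hf : ∀ u v, G.Adj u v → f u ≠ f v) :
    IsAcyclicOrientation G fun u v => G.Adj u v ∧ f u < f v := by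
  refine ⟨fun u v h => h.1, fun u v h => ?_, fun v h => ?_⟩
  · simp only [h, h.symm, true_and, not_lt]
    exact (hf u v h).le_iff_lt.symm
  · have : Relation.TransGen (· < ·) (f v) (f v) := h.lift f fun _ _ huv => huv.2
    rw [Relation.transGen_eq_self] at this
    exact lt_irrefl _ this

end AcyclicOrientation

theorem pairwiseDisjoint_image_cons {α : Type*} (s : Set α) (t : α → Set (List α)) :
    s.PairwiseDisjoint fun a => List.cons a '' t a := by
  intro a _ b _ hab
  rw [Function.onFun, Set.disjoint_left]
  rintro _ ⟨l, -, rfl⟩ ⟨l', -, h⟩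
  exact hab (List.cons.inj h).1.symm

section OrderedSetPartition

variable {V : Type*}

/-- The list `L` is an ordered set partition of the finite set `S`. -/
structure IsOrderedSetPartition (S : Finset V) (L : List (Finset V)) : Prop where
  nonempty : ∀ B ∈ L, B.Nonempty
  pairwise_disjoint : L.Pairwise Disjoint
  mem_iff : ∀ v, v ∈ S ↔ ∃ B ∈ L, v ∈ B

variable {S B : Finset V} {L : List (Finset V)} {u v : V}

theorem isOrderedSetPartition_nil : IsOrderedSetPartition S [] ↔ S = ∅ := by
  refine ⟨fun h => ?_, ?_⟩
  · simpa [eq_empty_iff_forall_notMem] using h.mem_iff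
  · rintro rfl
    exact ⟨by simp, .nil, by simp⟩

theorem isOrderedSetPartition_cons [DecidableEq V] :
    IsOrderedSetPartition S (B :: L) ↔
      (B ⊆ S ∧ B.Nonempty) ∧ IsOrderedSetPartition (S \ B) L := by
  constructor
  · rintro ⟨hne, hdisj, hmem⟩
    rw [List.forall_mem_cons] at hne
    rw [List.pairwise_cons] at hdisj
    have hBS : B ⊆ S := fun v hv => (hmem v).2 ⟨B, List.mem_cons_self, hv⟩
    refine ⟨⟨hBS, hne.1⟩, hne.2, hdisj.2, fun v => ?_⟩
    have hvB : ∀ C ∈ L, v ∈ C → v ∉ B := fun C hC hv => disjoint_right.1 (hdisj.1 C hC) hv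
    grind
  · rintro ⟨⟨hBS, hB⟩, hne, hdisj, hmem⟩
    refine ⟨List.forall_mem_cons.2 ⟨hB, hne⟩, List.pairwise_cons.2 ⟨fun C hC => ?_, hdisj⟩, ?_⟩
    · exact disjoint_right.2 fun v hv => (mem_sdiff.1 ((hmem v).2 ⟨C, hC, hv⟩)).2
    · intro v
      have hmem_v := hmem v
      grind

theorem IsOrderedSetPartition.length_le_card (h : IsOrderedSetPartition S L) :
    L.length ≤ #S := by
  classical
  induction L generalizing S with
  | nil => simp
  | cons B L ih =>
    obtain ⟨⟨hBS, hB⟩, hL⟩ := isOrderedSetPartition_cons.1 h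
    calc L.length + 1 ≤ #(S \ B) + #B := add_le_add (ih hL) hB.card_pos
      _ = #S := card_sdiff_add_card_eq_card hBS

variable [DecidableEq V]

/-- The index of the first block of `L` containing `v`; it is `L.length` if there is none. -/
def blockIndex (L : List (Finset V)) (v : V) : ℕ :=
  L.findIdx (v ∈ ·)

theorem blockIndex_cons : blockIndex (B :: L) v = if v ∈ B then 0 else blockIndex L v + 1 := by
  simp [blockIndex, List.findIdx_cons, Bool.cond_decide]

theorem IsOrderedSetPartition.blockIndex_eq_iff (h : IsOrderedSetPartition S L) (hu : u ∈ S) :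
    blockIndex L u = blockIndex L v ↔ ∃ B ∈ L, u ∈ B ∧ v ∈ B := by
  induction L generalizing S with
  | nil => simp [isOrderedSetPartition_nil.1 h] at hu
  | cons B L ih =>
    obtain ⟨-, hL⟩ := isOrderedSetPartition_cons.1 h
    have hmem_u := hL.mem_iff u
    have hmem_v := hL.mem_iff v
    have hindex := ih hL
    simp only [blockIndex_cons]
    grind

end OrderedSetPartition

theorem isIndepOSP_iff {n : ℕ} {G : SimpleGraph (Fin n)} {L : List (Finset (Fin n))} :
    IsIndepOSP G L ↔
      IsOrderedSetPartition univ L ∧ ∀ B ∈ L, G.IsIndepSet (B : Set (Fin n)) := by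
  have hunion : L.foldr (· ∪ ·) ∅ = univ ↔ ∀ v, v ∈ (univ : Finset (Fin n)) ↔ ∃ B ∈ L, v ∈ B := by
    have := L.foldr_sup_eq_sup_toFinset
    simp_all [Finset.ext_iff]
  have hindep : ∀ B : Finset (Fin n),
      (∀ u ∈ B, ∀ v ∈ B, ¬ G.Adj u v) ↔ G.IsIndepSet (B : Set (Fin n)) := fun B =>
    ⟨fun h u hu v hv _ => h u hu v hv, fun h u hu v hv huv => h hu hv huv.ne huv⟩
  simp only [IsIndepOSP, hunion, hindep]
  exact ⟨fun ⟨h₁, h₂, h₃, h₄⟩ => ⟨⟨h₁, h₂, h₃⟩, h₄⟩, fun ⟨⟨h₁, h₂, h₃⟩, h₄⟩ => ⟨h₁, h₂, h₃, h₄⟩⟩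

section Layering

variable {V : Type*}

open Classical in
/-- The elements of `S` at which no arrow of `R` from an element of `S` ends. -/
noncomputable def sources (R : V → V → Prop) (S : Finset V) : Finset V :=
  {v ∈ S | ∀ u ∈ S, ¬ R u v}

variable {R : V → V → Prop} {S B : Finset V} {L : List (Finset V)}

theorem mem_sources {v : V} : v ∈ sources R S ↔ v ∈ S ∧ ∀ u ∈ S, ¬ R u v := by
  simp [sources]

theorem sources_subset : sources R S ⊆ S :=
  fun _ hv => (mem_sources.1 hv).1

theorem sources_nonempty (hR : ∀ v, ¬ Relation.TransGen R v v) (hS : S.Nonempty) :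
    (sources R S).Nonempty := by
  have : Std.Irrefl (Relation.TransGen R) := ⟨hR⟩
  have : IsStrictOrder V (Relation.TransGen R) := {}
  have : Nonempty S := hS.to_subtype
  obtain ⟨v, -, hmin⟩ :=
    (S.wellFoundedOn (r := Relation.TransGen R)).has_min Set.univ Set.univ_nonempty
  exact ⟨v, mem_sources.2 ⟨v.2, fun u hu huv => hmin ⟨u, hu⟩ trivial (.single huv)⟩⟩

/-- The nonempty sets of sources, that is, the possible first blocks of a layering of `R` on `S`. -/
noncomputable def initialBlocks (R : V → V → Prop) (S : Finset V) : Finset (Finset V) :=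
  {B ∈ (sources R S).powerset | B.Nonempty}

theorem mem_initialBlocks : B ∈ initialBlocks R S ↔ B ⊆ sources R S ∧ B.Nonempty := by
  simp [initialBlocks]

theorem subset_of_mem_initialBlocks (hB : B ∈ initialBlocks R S) : B ⊆ S :=
  (mem_initialBlocks.1 hB).1.trans sources_subset

theorem sum_initialBlocks_neg_one_pow (hR : ∀ v, ¬ Relation.TransGen R v v) (hS : S.Nonempty) :
    ∑ B ∈ initialBlocks R S, (-1 : ℤ) ^ (#B + 1) = 1 := by
  classical
  have h := sum_powerset_neg_one_pow_card_of_nonempty (sources_nonempty hR hS)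
  rw [← add_sum_erase _ _ (empty_mem_powerset _), card_empty, pow_zero] at h
  simp only [initialBlocks, nonempty_iff_ne_empty, filter_ne', pow_succ, ← sum_mul]
  linarith

variable [DecidableEq V]

theorem sdiff_ssubset_of_mem_initialBlocks (hB : B ∈ initialBlocks R S) : S \ B ⊂ S :=
  sdiff_ssubset (subset_of_mem_initialBlocks hB) (mem_initialBlocks.1 hB).2

/-- `L` is an ordered set partition of `S` in which every arrow of `R` between elements of `S` goes
from a block to a strictly later one. -/
structure IsLayering (R : V → V → Prop) (S : Finset V) (L : List (Finset V)) : Prop extends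
    IsOrderedSetPartition S L where
  blockIndex_lt : ∀ u ∈ S, ∀ v ∈ S, R u v → blockIndex L u < blockIndex L v

theorem isLayering_nil : IsLayering R S [] ↔ S = ∅ := by
  refine ⟨fun h => isOrderedSetPartition_nil.1 h.1, ?_⟩
  rintro rfl
  exact ⟨isOrderedSetPartition_nil.2 rfl, by simp⟩

theorem isLayering_cons :
    IsLayering R S (B :: L) ↔ B ∈ initialBlocks R S ∧ IsLayering R (S \ B) L := by
  rw [mem_initialBlocks]
  constructor
  · rintro ⟨h, hlt⟩
    obtain ⟨⟨hBS, hB⟩, hL⟩ := isOrderedSetPartition_cons.1 h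
    simp only [blockIndex_cons] at hlt
    refine ⟨⟨fun v hv => mem_sources.2 ⟨hBS hv, fun u hu huv => ?_⟩, hB⟩, hL, ?_⟩
    · simpa [hv] using hlt u hu v (hBS hv) huv
    · grind
  · rintro ⟨⟨hB, hne⟩, hL, hlt⟩
    refine ⟨isOrderedSetPartition_cons.2 ⟨⟨hB.trans sources_subset, hne⟩, hL⟩, ?_⟩
    intro u hu v hv huv
    have hvB : v ∉ B := fun h => (mem_sources.1 (hB h)).2 u hu huv
    simp only [blockIndex_cons]
    grind

theorem setOf_isLayering_empty : {L | IsLayering R ∅ L} = {[]} := by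
  ext L
  cases L with
  | nil => simp [isLayering_nil]
  | cons B L => simp [isLayering_cons, mem_initialBlocks, sources]

theorem setOf_isLayering_of_nonempty (hS : S.Nonempty) :
    {L | IsLayering R S L} =
      ⋃ B ∈ (initialBlocks R S : Set (Finset V)),
        List.cons B '' {L | IsLayering R (S \ B) L} := by
  ext L
  cases L with
  | nil => simp [isLayering_nil, hS.ne_empty]
  | cons B L => simp [isLayering_cons, and_comm]

theorem finite_setOf_isLayering (R : V → V → Prop) (S : Finset V) :
    {L | IsLayering R S L}.Finite := by
  induction S using Finset.strongInduction with
  | H S ih =>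
    obtain rfl | hS := S.eq_empty_or_nonempty
    · simp [setOf_isLayering_empty]
    · rw [setOf_isLayering_of_nonempty hS]
      exact (finite_toSet _).biUnion fun B hB =>
        (ih _ (sdiff_ssubset_of_mem_initialBlocks hB)).image _

theorem finsum_image_cons_neg_one_pow (hB : B ∈ initialBlocks R S) :
    (∑ᶠ L ∈ List.cons B '' {L | IsLayering R (S \ B) L}, (-1 : ℤ) ^ (#S - L.length)) =
      (-1) ^ (#B + 1) * ∑ᶠ L ∈ {L | IsLayering R (S \ B) L}, (-1 : ℤ) ^ (#(S \ B) - L.length) := by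
  rw [finsum_mem_image List.cons_injective.injOn, mul_finsum_mem]
  refine finsum_mem_congr rfl fun L hL => ?_
  have hlen : L.length ≤ #(S \ B) := hL.length_le_card
  have hcard : #(S \ B) + #B = #S := card_sdiff_add_card_eq_card (subset_of_mem_initialBlocks hB)
  have hpos : 0 < #B := (mem_initialBlocks.1 hB).2.card_pos
  rw [← pow_add, List.length_cons,
    show #B + 1 + (#(S \ B) - L.length) = #S - (L.length + 1) + 2 by omega, pow_add]
  norm_num

theorem finsum_isLayering_neg_one_pow (hR : ∀ v, ¬ Relation.TransGen R v v) (S : Finset V) :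
    (∑ᶠ L ∈ {L | IsLayering R S L}, (-1 : ℤ) ^ (#S - L.length)) = 1 := by
  induction S using Finset.strongInduction with
  | H S ih =>
    obtain rfl | hS := S.eq_empty_or_nonempty
    · simp [setOf_isLayering_empty]
    calc (∑ᶠ L ∈ {L | IsLayering R S L}, (-1 : ℤ) ^ (#S - L.length))
        = ∑ B ∈ initialBlocks R S,
            ∑ᶠ L ∈ List.cons B '' {L | IsLayering R (S \ B) L}, (-1) ^ (#S - L.length) := by
          rw [setOf_isLayering_of_nonempty hS, finsum_mem_biUnion
            (pairwiseDisjoint_image_cons _ _) (finite_toSet _)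
            fun B _ => (finite_setOf_isLayering R _).image _, finsum_mem_coe_finset]
      _ = ∑ B ∈ initialBlocks R S, (-1) ^ (#B + 1) := by
          refine sum_congr rfl fun B hB => ?_
          rw [finsum_image_cons_neg_one_pow hB, ih _ (sdiff_ssubset_of_mem_initialBlocks hB),
            mul_one]
      _ = 1 := sum_initialBlocks_neg_one_pow hR hS

theorem IsAcyclicOrientation.eq_of_isLayering [Fintype V] {G : SimpleGraph V}
    {R₁ R₂ : V → V → Prop} (h₁ : IsAcyclicOrientation G R₁) (h₂ : IsAcyclicOrientation G R₂)
    (hL₁ : IsLayering R₁ univ L) (hL₂ : IsLayering R₂ univ L) : R₁ = R₂ := by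
  ext u v
  rw [h₁.rel_iff_adj_and_lt (f := blockIndex L) (by simpa using hL₁.blockIndex_lt),
    h₂.rel_iff_adj_and_lt (by simpa using hL₂.blockIndex_lt)]

theorem setOf_indep_isOrderedSetPartition_eq_biUnion [Fintype V] (G : SimpleGraph V) :
    {L : List (Finset V) | IsOrderedSetPartition univ L ∧ ∀ B ∈ L, G.IsIndepSet (B : Set V)} =
      ⋃ R ∈ {R | IsAcyclicOrientation G R}, {L | IsLayering R univ L} := by
  ext L
  simp only [Set.mem_ofPred_eq, Set.mem_iUnion, exists_prop]
  constructor
  · rintro ⟨hL, hindep⟩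
    have hne : ∀ u v, G.Adj u v → blockIndex L u ≠ blockIndex L v := by
      intro u v huv heq
      obtain ⟨B, hB, hu, hv⟩ := (hL.blockIndex_eq_iff (mem_univ u)).1 heq
      exact hindep B hB hu hv huv.ne huv
    exact ⟨_, isAcyclicOrientation_adj_and_lt hne, hL, fun u _ v _ h => h.2⟩
  · rintro ⟨R, hR, hL, hlt⟩
    refine ⟨hL, fun B hB u hu v hv _ huv => ?_⟩
    have heq := (hL.blockIndex_eq_iff (mem_univ u)).2 ⟨B, hB, hu, hv⟩
    rcases hR.adj_iff.1 huv with h | h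
    · exact (hlt u (mem_univ u) v (mem_univ v) h).ne heq
    · exact (hlt v (mem_univ v) u (mem_univ u) h).ne' heq

end Layering

theorem indep_osp_signed_sum_eq_card_acyclic_orientations_general {V : Type*} [Fintype V]
    (G : SimpleGraph V) :
    (∑ᶠ L ∈ {L : List (Finset V) |
        IsOrderedSetPartition univ L ∧ ∀ B ∈ L, G.IsIndepSet (B : Set V)},
      (-1 : ℤ) ^ (Fintype.card V - L.length)) =
      Set.ncard {R : V → V → Prop | IsAcyclicOrientation G R} := by
  classical
  have hdisj : {R | IsAcyclicOrientation G R}.PairwiseDisjoint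
      fun R => {L | IsLayering R univ L} :=
    fun R₁ h₁ R₂ h₂ hne => Set.disjoint_left.2 fun L hL₁ hL₂ =>
      hne (h₁.eq_of_isLayering h₂ hL₁ hL₂)
  rw [setOf_indep_isOrderedSetPartition_eq_biUnion, ← card_univ]
  calc _ = ∑ᶠ R ∈ {R | IsAcyclicOrientation G R},
        ∑ᶠ L ∈ {L | IsLayering R univ L}, (-1 : ℤ) ^ (#(univ : Finset V) - L.length) :=
        finsum_mem_biUnion hdisj (Set.toFinite _) fun R _ => finite_setOf_isLayering R _
    _ = ∑ᶠ R ∈ {R | IsAcyclicOrientation G R}, 1 :=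
        finsum_mem_congr rfl fun R hR => finsum_isLayering_neg_one_pow hR.2.2 univ
    _ = Set.ncard {R | IsAcyclicOrientation G R} := by
        rw [← finsum_one, Nat.cast_finsum_mem (Set.toFinite _), Nat.cast_one]

/-- The signed sum `Σ (−1)^{n−r}` over all ordered set partitions
`(L_1,…,L_r)` of the vertex set of `G` into independent sets equals the
number of acyclic orientations of `G`. -/
theorem indep_osp_signed_sum_eq_card_acyclic_orientations
    (n : ℕ) (G : SimpleGraph (Fin n)) :
    (∑ᶠ L ∈ {L : List (Finset (Fin n)) | IsIndepOSP G L}, (-1 : ℤ) ^ (n - L.length))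
      = Set.ncard {R : Fin n → Fin n → Prop | IsAcyclicOrientation G R} := by
  simpa only [isIndepOSP_iff, Fintype.card_fin] using
    indep_osp_signed_sum_eq_card_acyclic_orientations_general G
end

section
/- Let G be a simple graph on the linearly ordered vertex set {1,…,n}. The number of orderings (w_1,…,w_n) of the vertices of G (bijections from positions {1,…,n} to vertices) with the property that for all positions a < b with w_a < w_b there exists l with a ≤ l < b such that w_l is adjacent to w_b in G, equals the number of acyclic orientations of G. (These orderings are exactly the fixed points of the paper's left-right involution; the bijection sends an acyclic orientation to the ordering obtained by repeatedly removing and recording the largest remaining source.) -/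
open Set

variable {ι V : Type*}

theorem exists_equiv_forall_image_Iio [LinearOrder ι] [Finite V] (e : ι ≃ V)
    {P : Set V → V → Prop} (hP : ∀ S ≠ univ, ∃ v ∉ S, P S v) :
    ∃ w : ι ≃ V, ∀ a, P (w '' Iio a) (w a) := by
  have : Finite ι := .of_equiv V e.symm
  cases isEmpty_or_nonempty V
  · exact ⟨e, fun a => isEmptyElim (e a)⟩
  choose! next next_notMem hnext using hP
  let f : ι → V := WellFoundedLT.fix fun a g => next (range fun c : Iio a => g c c.2)
  have f_eq (a : ι) : f a = next (f '' Iio a) := by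
    rw [image_eq_range]
    exact WellFoundedLT.fix_eq _ a
  -- If the values before `a` already exhausted `V`, then `f` would be surjective, hence injective,
  -- although `f a` repeats one of those values.
  have image_ne (a : ι) : f '' Iio a ≠ univ := by
    intro h
    have surj : f.Surjective := fun v => by
      obtain ⟨c, -, hc⟩ := h ▸ mem_univ v
      exact ⟨c, hc⟩
    obtain ⟨c, hca, hc⟩ := h ▸ mem_univ (f a)
    exact (mem_Iio.mp hca).ne ((Finite.injective_iff_surjective_of_equiv e).mpr surj hc)
  have inj : f.Injective := .of_lt_imp_ne fun a b hab h =>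
    next_notMem _ (image_ne b) (f_eq b ▸ h ▸ mem_image_of_mem f hab)
  have surj : f.Surjective := (Finite.injective_iff_surjective_of_equiv e).mp inj
  have apply_f (a : ι) : P (f '' Iio a) (f a) := f_eq a ▸ hnext _ (image_ne a)
  exact ⟨.ofBijective f ⟨inj, surj⟩, apply_f⟩

section Orientation

variable {G : SimpleGraph V} {R R' : V → V → Prop}

/-- The orientation of `G` directing every edge towards its endpoint with the larger label. -/
def orientationOfLabeling [LT ι] (G : SimpleGraph V) (f : V → ι) (u v : V) : Prop :=
  G.Adj u v ∧ f u < f v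

theorem isAcyclicOrientation_orientationOfLabeling [LinearOrder ι] {f : V → ι}
    (hf : ∀ u v, G.Adj u v → f u ≠ f v) :
    IsAcyclicOrientation G (orientationOfLabeling G f) := by
  refine ⟨fun u v h => h.1, fun u v huv => ?_, fun v hv => ?_⟩
  · simp only [orientationOfLabeling, huv, huv.symm, true_and, not_lt]
    exact (hf u v huv).le_iff_lt.symm
  · have : Relation.TransGen (· < ·) (f v) (f v) := hv.lift f fun _ _ h => h.2
    exact lt_irrefl _ (Relation.transGen_eq_self (r := ((· < ·) : ι → ι → Prop)) ▸ this)

theorem isAcyclicOrientation_orientationOfLabeling_symm [LinearOrder ι] (G : SimpleGraph V)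
    (w : ι ≃ V) :
    IsAcyclicOrientation G (orientationOfLabeling G w.symm) :=
  isAcyclicOrientation_orientationOfLabeling fun _ _ h => w.symm.injective.ne h.ne

theorem IsAcyclicOrientation.eq_of_le (hR : IsAcyclicOrientation G R)
    (hR' : IsAcyclicOrientation G R') (h : R ≤ R') : R = R' := by
  refine le_antisymm h fun u v huv => ?_
  have hadj : G.Adj u v := hR'.1 u v huv
  exact (hR.2.1 u v hadj).mpr fun hvu => (hR'.2.1 u v hadj).mp huv (h v u hvu)

end Orientation

section Sources

variable {R : V → V → Prop}

/-- The sources of the restriction of `R` to the complement of `S`, that is, the sources that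
remain once the vertices in `S` have been removed. -/
def remainingSources (R : V → V → Prop) (S : Set V) : Set V :=
  {v | v ∉ S ∧ ∀ u, R u v → u ∈ S}

theorem remainingSources_nonempty [Finite V] (hR : ∀ v, ¬ Relation.TransGen R v v) {S : Set V}
    (hS : S ≠ univ) : (remainingSources R S).Nonempty := by
  have : Std.Irrefl (Relation.TransGen R) := ⟨hR⟩
  have wf : WellFounded (Relation.TransGen R) := Finite.wellFounded_of_trans_of_irrefl _
  obtain ⟨v, hv, hmin⟩ := wf.has_min Sᶜ (nonempty_compl.mpr hS)
  exact ⟨v, hv, fun u huv => not_notMem.mp fun hu => hmin u hu (.single huv)⟩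

theorem apply_mem_remainingSources_image_Iio [LinearOrder ι] {w : ι ≃ V} {a b : ι} :
    w b ∈ remainingSources R (w '' Iio a) ↔ a ≤ b ∧ ∀ l, R (w l) (w b) → l < a := by
  simp only [remainingSources, mem_ofPred_eq, w.injective.mem_set_image, mem_Iio, not_lt,
    w.surjective.forall]

end Sources

section Greedy

variable [LinearOrder ι] [LinearOrder V] {G : SimpleGraph V} {R : V → V → Prop} {w w' : ι ≃ V}

/-- The ordering `w` of the vertices arises from `R` by repeatedly removing and recording the
largest remaining source. -/
def IsGreedyOrdering (R : V → V → Prop) (w : ι ≃ V) : Prop :=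
  ∀ a, IsGreatest (remainingSources R (w '' Iio a)) (w a)

theorem IsGreedyOrdering.unique [WellFoundedLT ι] (hw : IsGreedyOrdering R w)
    (hw' : IsGreedyOrdering R w') : w = w' := by
  ext a
  induction a using WellFoundedLT.induction with
  | ind a ih => exact (hw a).unique (image_congr ih ▸ hw' a)

theorem exists_isGreedyOrdering [Finite V] (e : ι ≃ V) (hR : ∀ v, ¬ Relation.TransGen R v v) :
    ∃ w : ι ≃ V, IsGreedyOrdering R w := by
  refine exists_equiv_forall_image_Iio e
    (P := fun S v => IsGreatest (remainingSources R S) v) fun S hS => ?_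
  obtain ⟨v, hv, hmax⟩ := exists_max_image _ id (toFinite _) (remainingSources_nonempty hR hS)
  exact ⟨v, hv.1, hv, hmax⟩

theorem IsGreedyOrdering.symm_lt_symm (hw : IsGreedyOrdering R w) {u v : V} (huv : R u v) :
    w.symm u < w.symm v := by
  have hv := (apply_mem_remainingSources_image_Iio.mp (hw (w.symm v)).1).2
  exact hv (w.symm u) (by simpa only [w.apply_symm_apply] using huv)

theorem IsGreedyOrdering.orientationOfLabeling_symm_eq (hw : IsGreedyOrdering R w)
    (hR : IsAcyclicOrientation G R) : orientationOfLabeling G w.symm = R :=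
  .symm <| hR.eq_of_le (isAcyclicOrientation_orientationOfLabeling_symm G w)
    fun u v huv => ⟨hR.1 u v huv, hw.symm_lt_symm huv⟩

/-- The orderings fixed by the left-right involution: between the position of a vertex (included)
and that of any larger vertex occurring after it, there is a neighbour of the latter. -/
def IsSpecialOrdering (G : SimpleGraph V) (w : ι ≃ V) : Prop :=
  ∀ a b : ι, a < b → w a < w b → ∃ l : ι, a ≤ l ∧ l < b ∧ G.Adj (w l) (w b)

theorem isSpecialOrdering_iff_isGreedyOrdering :
    IsSpecialOrdering G w ↔ IsGreedyOrdering (orientationOfLabeling G w.symm) w := by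
  simp only [IsGreedyOrdering, IsGreatest, mem_upperBounds, w.surjective.forall,
    apply_mem_remainingSources_image_Iio, orientationOfLabeling, w.symm_apply_apply]
  constructor
  · refine fun hw a => ⟨⟨le_rfl, fun l hl => hl.2⟩, fun b ⟨hab, hb⟩ => ?_⟩
    by_contra! hlt
    obtain ⟨l, hal, hlb, hadj⟩ := hw a b (hab.lt_of_ne fun h => hlt.ne (congrArg w h)) hlt
    exact (hb l ⟨hadj, hlb⟩).not_ge hal
  · intro hw a b hab hlt
    by_contra! hno
    refine hlt.not_ge ((hw a).2 b ⟨hab.le, fun l ⟨hadj, hlb⟩ => ?_⟩)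
    exact not_le.mp fun hal => hno l hal hlb hadj

end Greedy

theorem card_special_orderings_eq_card_acyclic_orientations_general [LinearOrder ι]
    [LinearOrder V] [Finite V] (hιV : Nonempty (ι ≃ V)) (G : SimpleGraph V) :
    {w : ι ≃ V | IsSpecialOrdering G w}.ncard = {R | IsAcyclicOrientation G R}.ncard := by
  obtain ⟨e⟩ := hιV
  have : Finite ι := .of_equiv V e.symm
  refine ncard_congr (fun w _ => orientationOfLabeling G w.symm)
    (fun w _ => isAcyclicOrientation_orientationOfLabeling_symm G w)
    (fun w w' hw hw' h => ?injective) fun R hR => ?surjective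
  case injective =>
    have greedy := isSpecialOrdering_iff_isGreedyOrdering.mp hw
    have greedy' := isSpecialOrdering_iff_isGreedyOrdering.mp hw'
    exact greedy.unique (h ▸ greedy')
  case surjective =>
    obtain ⟨w, hw⟩ := exists_isGreedyOrdering e hR.2.2
    have h_eq := hw.orientationOfLabeling_symm_eq hR
    exact ⟨w, isSpecialOrdering_iff_isGreedyOrdering.mpr (h_eq ▸ hw), h_eq⟩

/-- The number of orderings `(w_1,…,w_n)` of the vertices of `G` (bijections
from positions to vertices) such that for all positions `a < b` with
`w a < w b` there is a position `l` with `a ≤ l < b` and `w l` adjacent to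
`w b`, equals the number of acyclic orientations of `G`. -/
theorem card_special_orderings_eq_card_acyclic_orientations
    (n : ℕ) (G : SimpleGraph (Fin n)) :
    Set.ncard {w : Fin n ≃ Fin n |
        ∀ a b : Fin n, a < b → w a < w b →
          ∃ l : Fin n, a ≤ l ∧ l < b ∧ G.Adj (w l) (w b)}
      = Set.ncard {R : Fin n → Fin n → Prop | IsAcyclicOrientation G R} :=
  card_special_orderings_eq_card_acyclic_orientations_general ⟨Equiv.refl _⟩ G
end
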